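/- arXiv:2402.02853 — 2 statements merged into one kernel-verified Lean document; each statement's English description precedes it below -/
import Mathlib

section
/- Let m ≥ 5 be an integer, n = 2^m − 1, and let β be a primitive element of F_{2^m}. Then the cyclic code of length 2n over F_2 with generator polynomial (x−1)^2 m_β(x)^2 m_{β^3}(x) m_{β^5}(x) has dimension 2(2^m − 1) − 4m − 2 and minimum distance exactly 8. -/
open Polynomial

/-- The cyclic code of length `N` over the field `F` generated by the polynomial `g`.
Codewords are identified with the representatives of degree `< N` of the elements of the
ideal generated by `g` in `F[x]/(x^N - 1)`; equivalently, a polynomial `c` of degree `< N`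
is a codeword iff `c ∈ (g, x^N - 1)` as an ideal of `F[x]`. -/
noncomputable def cyclicCode (F : Type*) [Field F] (N : ℕ) (g : Polynomial F) :
    Submodule F (Polynomial F) :=
  Polynomial.degreeLT F N ⊓
    Submodule.restrictScalars F (Ideal.span ({g, Polynomial.X ^ N - 1} : Set (Polynomial F)))

/-- The minimum distance (equivalently, the minimum Hamming weight of a nonzero codeword,
a codeword being identified with its coefficient vector) of a linear code of polynomials. -/
noncomputable def minDist {F : Type*} [Field F] (C : Submodule F (Polynomial F)) : ℕ :=
  sInf {w | ∃ c ∈ C, c ≠ 0 ∧ c.support.card = w}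

section aux
variable {K : Type*} [Field K] [Fintype K] [Algebra (ZMod 2) K]

/-- BCH bound. -/
theorem aux_bch (β : K) (N : ℕ) (hβ : IsPrimitiveRoot β N) (d : ℕ) (p : (ZMod 2)[X])
    (hp0 : p ≠ 0) (hdeg : p.degree < N) (h : ∀ j < d, aeval (β ^ j) p = 0) :
    d < p.support.card := by
  by_contra hcon
  push Not at hcon
  obtain ⟨i0, hi0⟩ := Polynomial.support_nonempty.2 hp0
  set L : K[X] := ∏ i ∈ p.support.erase i0, (X - C (β ^ i)) with hL
  have hLdeg : L.natDegree < d := by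
    rw [hL, natDegree_prod_of_monic _ _ (fun i _ => monic_X_sub_C _)]
    simp only [natDegree_X_sub_C, Finset.sum_const, smul_eq_mul, mul_one]
    rw [Finset.card_erase_of_mem hi0]
    have : 0 < p.support.card := Finset.card_pos.2 ⟨i0, hi0⟩
    omega
  have hlt : ∀ i ∈ p.support, i < N := by
    intro i hi
    have := (le_degree_of_mem_supp i hi).trans_lt hdeg
    exact_mod_cast this
  have h1 : ∑ i ∈ p.support, algebraMap (ZMod 2) K (p.coeff i) * L.eval (β ^ i) = 0 := by
    simp_rw [eval_eq_sum_range, Finset.mul_sum]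
    rw [Finset.sum_comm]
    apply Finset.sum_eq_zero
    intro j hj
    have hj' : j < d := by
      have := Finset.mem_range.1 hj
      omega
    have := h j hj'
    rw [aeval_eq_sum_range, ] at this
    have h2 : ∑ i ∈ p.support, algebraMap (ZMod 2) K (p.coeff i) * (β ^ j) ^ i = 0 := by
      rw [← h j hj', aeval_def, eval₂_def, Polynomial.sum_def]
    calc _ = L.coeff j * ∑ i ∈ p.support, algebraMap (ZMod 2) K (p.coeff i) * (β ^ j) ^ i := by
          rw [Finset.mul_sum]
          apply Finset.sum_congr rfl
          intro i _
          rw [← pow_mul, ← pow_mul, mul_comm j i]; ring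
      _ = 0 := by rw [h2, mul_zero]
  rw [Finset.sum_eq_single i0] at h1
  · rcases mul_eq_zero.1 h1 with h1 | h1
    · have := (map_eq_zero (algebraMap (ZMod 2) K)).1 h1
      exact (mem_support_iff.1 hi0) this
    · rw [hL, eval_prod, Finset.prod_eq_zero_iff] at h1
      obtain ⟨i, hi, hi'⟩ := h1
      rw [Finset.mem_erase] at hi
      simp only [eval_sub, eval_X, eval_C] at hi'
      exact hi.1 (hβ.pow_inj (hlt _ hi0) (hlt _ hi.2) (sub_eq_zero.1 hi')).symm
  · intro i hi hne
    rw [hL, eval_prod, Finset.prod_eq_zero (Finset.mem_erase.2 ⟨hne, hi⟩) (by simp), mul_zero]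
  · intro h; exact absurd hi0 h

theorem aux_sq (γ : K) (p : (ZMod 2)[X]) (h : aeval γ p = 0) : aeval (γ ^ 2) p = 0 := by
  rw [← expand_aeval, ZMod.expand_card, map_pow, h]; simp

theorem aux_finrank (m : ℕ) (hK : Fintype.card K = 2 ^ m) : Module.finrank (ZMod 2) K = m := by
  have := Module.card_eq_pow_finrank (K := ZMod 2) (V := K)
  rw [hK, ZMod.card] at this
  exact (Nat.pow_right_injective le_rfl this).symm

theorem aux_deg (m : ℕ) (hm : 5 ≤ m) (hK : Fintype.card K = 2 ^ m)
    (β : K) (hβ : IsPrimitiveRoot β (2 ^ m - 1)) (k : ℕ) (hk0 : 0 < k) (hk : k ≤ 5) :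
    (minpoly (ZMod 2) (β ^ k)).natDegree = m := by
  have h32 : 2 ^ 5 ≤ 2 ^ m := Nat.pow_le_pow_right (by norm_num) hm
  have hint : IsIntegral (ZMod 2) (β ^ k) := Algebra.IsIntegral.isIntegral _
  have hdvd := minpoly.degree_dvd hint
  rw [aux_finrank m hK] at hdvd
  set d := (minpoly (ZMod 2) (β ^ k)).natDegree with hd
  have hdpos : 0 < d := minpoly.natDegree_pos hint
  have hβ0 : β ≠ 0 := hβ.ne_zero (by omega)
  have hone : (β ^ k) ^ (2 ^ d - 1) = 1 := by
    classical
    have hc : Nat.card (IntermediateField.adjoin (ZMod 2) {β ^ k}) = 2 ^ d := by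
      rw [Module.natCard_eq_pow_finrank (K := ZMod 2), IntermediateField.adjoin.finrank hint]
      simp [hd]
    letI : Fintype (IntermediateField.adjoin (ZMod 2) {β ^ k}) := Fintype.ofFinite _
    have := FiniteField.pow_card_sub_one_eq_one
      (IntermediateField.AdjoinSimple.gen (ZMod 2) (β ^ k)) (by
        intro h
        have h' := congrArg (algebraMap _ K) h
        rw [IntermediateField.AdjoinSimple.algebraMap_gen, map_zero] at h'
        exact pow_ne_zero k hβ0 h')
    rw [← Nat.card_eq_fintype_card, hc] at this
    have h' := congrArg (algebraMap _ K) this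
    rwa [map_pow, IntermediateField.AdjoinSimple.algebraMap_gen, map_one] at h'
  rw [← pow_mul, hβ.pow_eq_one_iff_dvd] at hone
  have h2d : 2 ^ 1 ≤ 2 ^ d := Nat.pow_le_pow_right (by norm_num) hdpos
  have hle := Nat.le_of_dvd (Nat.mul_pos hk0 (by omega)) hone
  have hle5 : 2 ^ m - 1 ≤ 5 * (2 ^ d - 1) := hle.trans (Nat.mul_le_mul_right _ hk)
  by_contra hne
  obtain ⟨e, he⟩ := hdvd
  have he2 : 2 ≤ e := by
    rcases e with _ | _ | e
    · omega
    · omega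
    · omega
  have h2 : 2 ^ (d * 2) ≤ 2 ^ m := Nat.pow_le_pow_right (by norm_num) (by rw [he]; exact Nat.mul_le_mul_left _ he2)
  rw [pow_mul] at h2
  generalize 2 ^ d = A at *
  generalize 2 ^ m = B at *
  have : A ≤ 4 := by
    by_contra hA
    push Not at hA
    have : 5 * A ≤ A ^ 2 := by nlinarith
    omega
  omega

theorem aux_coprime (a b : K) (h : minpoly (ZMod 2) a ≠ minpoly (ZMod 2) b) :
    IsCoprime (minpoly (ZMod 2) a) (minpoly (ZMod 2) b) := by
  have ha : IsIntegral (ZMod 2) a := Algebra.IsIntegral.isIntegral _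
  have hb : IsIntegral (ZMod 2) b := Algebra.IsIntegral.isIntegral _
  rw [(minpoly.irreducible ha).coprime_iff_not_dvd]
  rintro ⟨q, hq⟩
  apply h
  symm
  refine minpoly.eq_of_irreducible_of_monic (minpoly.irreducible hb) ?_ (minpoly.monic hb)
  rw [hq, map_mul, minpoly.aeval, zero_mul]

theorem aux_conj (m : ℕ) (hK : Fintype.card K = 2 ^ m)
    (β : K) (hβ : IsPrimitiveRoot β (2 ^ m - 1)) (a b : ℕ)
    (h : minpoly (ZMod 2) (β ^ a) = minpoly (ZMod 2) (β ^ b)) :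
    ∃ i < m, b * 2 ^ i ≡ a [MOD 2 ^ m - 1] := by
  have hn0 : 2 ^ m - 1 ≠ 0 := by
    have := Fintype.one_lt_card (α := K)
    omega
  have hf := aux_finrank m hK
  obtain ⟨σ, hσ⟩ := (Normal.minpoly_eq_iff_mem_orbit K).1 h
  obtain ⟨⟨i, hi⟩, rfl⟩ := (FiniteField.bijective_frobeniusAlgEquivOfAlgebraic_pow (ZMod 2) K).2 σ
  refine ⟨i, hf ▸ hi, ?_⟩
  have h2 : (β ^ b) ^ (2 ^ i) = β ^ a := by
    rw [← hσ]
    change _ = (FiniteField.frobeniusAlgEquivOfAlgebraic (ZMod 2) K ^ i) (β ^ b)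
    rw [AlgEquiv.coe_pow, FiniteField.coe_frobeniusAlgEquivOfAlgebraic_iterate, ZMod.card]
  rw [← pow_mul, IsOfFinOrder.pow_eq_pow_iff_modEq (hβ.isOfFinOrder hn0), ← hβ.eq_orderOf] at h2
  exact h2

theorem aux_ne13 (m : ℕ) (hm : 5 ≤ m) (hK : Fintype.card K = 2 ^ m)
    (β : K) (hβ : IsPrimitiveRoot β (2 ^ m - 1)) (k : ℕ) (hk : k = 3 ∨ k = 5) :
    minpoly (ZMod 2) (β ^ k) ≠ minpoly (ZMod 2) (β ^ 1) := by
  intro h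
  have h32 : 2 ^ 5 ≤ 2 ^ m := Nat.pow_le_pow_right (by norm_num) hm
  obtain ⟨i, hi, hmod⟩ := aux_conj m hK β hβ _ _ h
  have h1 : 2 ^ (i + 1) ≤ 2 ^ m := Nat.pow_le_pow_right (by norm_num) hi
  rw [pow_succ] at h1
  rw [one_mul] at hmod
  have := Nat.ModEq.eq_of_lt_of_lt hmod (by omega) (by omega)
  rcases i with _ | i
  · simp at this; omega
  · rw [pow_succ] at this; omega

theorem aux_ne35 (m : ℕ) (hm : 5 ≤ m) (hK : Fintype.card K = 2 ^ m)
    (β : K) (hβ : IsPrimitiveRoot β (2 ^ m - 1)) :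
    minpoly (ZMod 2) (β ^ 5) ≠ minpoly (ZMod 2) (β ^ 3) := by
  intro h
  have h32 : 2 ^ 5 ≤ 2 ^ m := Nat.pow_le_pow_right (by norm_num) hm
  obtain ⟨i, hi, hmod⟩ := aux_conj m hK β hβ _ _ h
  by_cases hi' : i + 1 = m
  · subst hi'
    rw [pow_succ] at h32 hmod
    have : 3 * 2 ^ i = 2 ^ i + 1 + (2 ^ i * 2 - 1) := by omega
    rw [this] at hmod
    have h2 : 2 ^ i + 1 ≡ 5 [MOD 2 ^ i * 2 - 1] := by
      have : 2 ^ i + 1 + (2 ^ i * 2 - 1) ≡ 2 ^ i + 1 [MOD 2 ^ i * 2 - 1] := by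
        simp [Nat.ModEq]
      exact this.symm.trans hmod
    have := Nat.ModEq.eq_of_lt_of_lt h2 (by omega) (by omega)
    omega
  · have h1 : 2 ^ (i + 2) ≤ 2 ^ m := Nat.pow_le_pow_right (by norm_num) (by omega)
    rw [pow_add] at h1
    have := Nat.ModEq.eq_of_lt_of_lt hmod (by omega) (by omega)
    omega

theorem aux_card {F : Type*} [Field F] (n : ℕ) (u v : F[X]) (hu : u.degree < n) :
    (u + X ^ n * v).support.card = u.support.card + v.support.card := by
  have hs : (u + X ^ n * v).support = u.support ∪ v.support.map (addRightEmbedding n) := by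
    ext i
    simp only [mem_support_iff, coeff_add, coeff_X_pow_mul', Finset.mem_union, Finset.mem_map,
      addRightEmbedding_apply]
    split_ifs with h
    · rw [coeff_eq_zero_of_degree_lt (hu.trans_le (by exact_mod_cast h))]
      simp only [zero_add, ne_eq, not_true_eq_false, false_or]
      constructor
      · intro h1; exact ⟨i - n, h1, by omega⟩
      · rintro ⟨j, hj, rfl⟩; simpa using hj
    · rw [add_zero]
      constructor
      · exact Or.inl
      · rintro (h1 | ⟨j, hj, rfl⟩)
        · exact h1
        · omega
  rw [hs, Finset.card_union_of_disjoint, Finset.card_map]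
  rw [Finset.disjoint_left]
  intro i hi hi'
  simp only [Finset.mem_map, addRightEmbedding_apply] at hi'
  obtain ⟨j, _, rfl⟩ := hi'
  have := (le_degree_of_mem_supp _ hi).trans_lt hu
  have : j + n < n := by exact_mod_cast this
  omega

theorem aux_mem {F : Type*} [Field F] (N : ℕ) (g : F[X]) (hg : g ∣ X ^ N - 1) (c : F[X]) :
    c ∈ cyclicCode F N g ↔ c.degree < N ∧ g ∣ c := by
  have : Ideal.span ({g, X ^ N - 1} : Set F[X]) = Ideal.span {g} := by
    apply le_antisymm
    · rw [Ideal.span_le]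
      rintro x (rfl | rfl)
      · exact Ideal.mem_span_singleton_self _
      · exact Ideal.mem_span_singleton.2 hg
    · exact Ideal.span_mono (by simp)
  rw [cyclicCode, this, Submodule.mem_inf, mem_degreeLT, Submodule.restrictScalars_mem,
    Ideal.mem_span_singleton]

theorem aux_dim {F : Type*} [Field F] (N : ℕ) (g : F[X]) (hg : g ∣ X ^ N - 1) (hm : g.Monic)
    (d : ℕ) (hd : g.natDegree = d) (hdN : d ≤ N) :
    Module.finrank F (cyclicCode F N g) = N - d := by
  have h : cyclicCode F N g = (degreeLT F (N - d)).map (LinearMap.mulLeft F g) := by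
    ext c
    rw [aux_mem N g hg, Submodule.mem_map]
    have key : ∀ q : F[X], (g * q).degree < N ↔ q.degree < (N - d : ℕ) := by
      intro q
      by_cases hq : q = 0
      · simp [hq, bot_lt_iff_ne_bot]
      · rw [degree_mul, degree_eq_natDegree hq, degree_eq_natDegree hm.ne_zero, hd]
        norm_cast
        omega
    constructor
    · rintro ⟨h1, q, rfl⟩
      exact ⟨q, mem_degreeLT.2 ((key q).1 h1), rfl⟩
    · rintro ⟨q, hq, rfl⟩
      exact ⟨(key q).2 (mem_degreeLT.1 hq), q, rfl⟩
  have hinj : Function.Injective (LinearMap.mulLeft F g) := by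
    intro a b hab
    exact mul_left_cancel₀ hm.ne_zero hab
  rw [h, ← (Submodule.equivMapOfInjective _ hinj (degreeLT F (N - d))).finrank_eq,
    (degreeLTEquiv F (N - d)).finrank_eq]
  simp

/-- Weight-four word in the even-weight Hamming code. -/
theorem aux_word (n : ℕ) (hn : 5 ≤ n) (hK : Fintype.card K = n + 1) (β : K)
    (hβ : IsPrimitiveRoot β n) :
    ∃ u : (ZMod 2)[X], u.degree < n ∧ u.support.card = 4 ∧ aeval (1 : K) u = 0 ∧
      aeval β u = 0 := by
  haveI : CharP K 2 := charP_of_injective_algebraMap (algebraMap (ZMod 2) K).injective 2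
  have h2 : ∀ x : K, x + x = 0 := CharTwo.add_self_eq_zero
  have hp : ∀ i j, i < n → j < n → i ≠ j → β ^ i ≠ β ^ j := fun i j hi hj hij h =>
    hij (hβ.pow_inj hi hj h)
  haveI : NeZero n := ⟨by omega⟩
  have hγ0 : 1 + β + β ^ 2 ≠ 0 := by
    intro h
    apply hp 3 0 (by omega) (by omega) (by omega)
    linear_combination (β - 1) * h
  obtain ⟨k, hk, hkγ⟩ := hβ.eq_pow_of_pow_eq_one (ξ := 1 + β + β ^ 2) (by
    have := FiniteField.pow_card_sub_one_eq_one _ hγ0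
    rwa [hK, Nat.add_sub_cancel] at this)
  have hβ0 : β ≠ 0 := hβ.ne_zero (by omega)
  have hβ1 : β + 1 ≠ 0 := by
    intro h
    apply hp 1 0 (by omega) (by omega) (by omega)
    linear_combination h - h2 1
  have hk0 : k ≠ 0 := by
    rintro rfl
    have : β * (β + 1) = 0 := by linear_combination -hkγ
    exact (mul_ne_zero hβ0 hβ1) this
  have hk1 : k ≠ 1 := by
    rintro rfl
    have : (β + 1) * (β + 1) = 0 := by linear_combination -hkγ + h2 β
    exact (mul_ne_zero hβ1 hβ1) this
  have hk2 : k ≠ 2 := by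
    rintro rfl
    have : β + 1 = 0 := by linear_combination -hkγ
    exact hβ1 this
  have hs : (∑ i ∈ ({0, 1, 2, k} : Finset ℕ), (X : (ZMod 2)[X]) ^ i).support = {0, 1, 2, k} := by
    ext j
    rw [mem_support_iff, finset_sum_coeff]
    simp only [coeff_X_pow, Finset.sum_ite_eq]
    split_ifs with h <;> simp [h]
  have hsum : ∀ f : ℕ → K, ∑ i ∈ ({0, 1, 2, k} : Finset ℕ), f i = f 0 + f 1 + f 2 + f k := by
    intro f
    rw [Finset.sum_insert (by simp; omega), Finset.sum_insert (by simp; omega),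
      Finset.sum_insert (by simp; omega), Finset.sum_singleton]
    ring
  refine ⟨∑ i ∈ ({0, 1, 2, k} : Finset ℕ), X ^ i, ?_, ?_, ?_, ?_⟩
  · rw [degree_lt_iff_coeff_zero]
    intro j hj
    rw [← notMem_support_iff, hs]
    simp; omega
  · rw [hs, Finset.card_insert_of_notMem (by simp; omega),
      Finset.card_insert_of_notMem (by simp; omega), Finset.card_insert_of_notMem (by simp; omega),
      Finset.card_singleton]
  · rw [map_sum, ]
    simp only [map_pow, aeval_X, one_pow]
    rw [hsum]
    linear_combination 2 * h2 1
  · rw [map_sum, ]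
    simp only [map_pow, aeval_X]
    rw [hsum, hkγ]
    linear_combination h2 (1 + β + β ^ 2)

end aux

/-- for `m ≥ 5`, `n = 2^m - 1` and `β` a primitive element of `F_{2^m}`,
the repeated-root binary cyclic code of length `2n` with generator polynomial
`(x-1)^2 m_β(x)^2 m_{β³}(x) m_{β⁵}(x)` has dimension `2(2^m - 1) - 4m - 2` and minimum
distance exactly `8`. -/
theorem statement11 {K : Type*} [Field K] [Fintype K] [Algebra (ZMod 2) K]
    (m : ℕ) (hm : 5 ≤ m) (hK : Fintype.card K = 2 ^ m)
    (n : ℕ) (hn : n = 2 ^ m - 1)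
    (β : K) (hβ : IsPrimitiveRoot β (2 ^ m - 1)) :
    Module.finrank (ZMod 2)
        (cyclicCode (ZMod 2) (2 * n)
          ((X - 1) ^ 2 * (minpoly (ZMod 2) β) ^ 2 * minpoly (ZMod 2) (β ^ 3) *
            minpoly (ZMod 2) (β ^ 5))) =
      2 * (2 ^ m - 1) - 4 * m - 2 ∧
    minDist (cyclicCode (ZMod 2) (2 * n)
        ((X - 1) ^ 2 * (minpoly (ZMod 2) β) ^ 2 * minpoly (ZMod 2) (β ^ 3) *
          minpoly (ZMod 2) (β ^ 5))) = 8 := by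
  classical
  subst hn
  have h32 : 2 ^ 5 ≤ 2 ^ m := Nat.pow_le_pow_right (by norm_num) hm
  have hm32 : 16 * m ≤ 5 * 2 ^ m := by
    clear hK hβ h32
    induction m, hm using Nat.le_induction with
    | base => norm_num
    | succ k hk ih => rw [pow_succ]; omega
  have hmm : 2 * m + 1 ≤ 2 ^ m - 1 := by
    clear hK hβ h32 hm32
    induction m, hm using Nat.le_induction with
    | base => norm_num
    | succ k hk ih => rw [pow_succ]; omega
  have hcardn : Fintype.card K = (2 ^ m - 1) + 1 := by omega
  have hodd : ((2 ^ m - 1 : ℕ) : ZMod 2) = 1 := by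
    have : (2 ^ m - 1 : ℕ) % 2 = 1 := by
      obtain ⟨k, rfl⟩ : ∃ k, m = k + 1 := ⟨m - 1, by omega⟩
      rw [pow_succ] at *
      omega
    have h := (ZMod.natCast_eq_natCast_iff (2 ^ m - 1) 1 2).2 this
    rwa [Nat.cast_one] at h
  have hβ1 : β ^ 1 = β := pow_one β
  have d1 := aux_deg m hm hK β hβ 1 (by norm_num) (by norm_num)
  have d3 := aux_deg m hm hK β hβ 3 (by norm_num) (by norm_num)
  have d5 := aux_deg m hm hK β hβ 5 (by norm_num) (by norm_num)
  have n13 := aux_ne13 m hm hK β hβ 3 (by norm_num)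
  have n15 := aux_ne13 m hm hK β hβ 5 (by norm_num)
  have n35 := aux_ne35 m hm hK β hβ
  rw [hβ1] at d1 n13 n15
  have hone : (X - 1 : (ZMod 2)[X]) = minpoly (ZMod 2) (1 : K) := by
    rw [minpoly.one]
  have d0 : (minpoly (ZMod 2) (1 : K)).natDegree = 1 := by
    rw [← hone, ← C_1, natDegree_X_sub_C]
  have hne0 : ∀ x : K, (minpoly (ZMod 2) x).natDegree = m →
      minpoly (ZMod 2) (1 : K) ≠ minpoly (ZMod 2) x := by
    intro x hx h
    rw [← h, d0] at hx
    omega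
  have mon : ∀ x : K, (minpoly (ZMod 2) x).Monic := fun x =>
    minpoly.monic (Algebra.IsIntegral.isIntegral x)
  have hdvd : ∀ x : K, x ^ (2 ^ m - 1) = 1 →
      minpoly (ZMod 2) x ∣ X ^ (2 ^ m - 1) - 1 := by
    intro x hx
    apply minpoly.dvd
    simp [hx]
  have hb1 : β ^ (2 ^ m - 1) = 1 := hβ.pow_eq_one
  have hbk : ∀ k, (β ^ k) ^ (2 ^ m - 1) = 1 := by
    intro k
    rw [← pow_mul, mul_comm, pow_mul, hb1, one_pow]
  rw [hone]
  have c01 := aux_coprime _ _ (hne0 _ d1)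
  have c03 := aux_coprime _ _ (hne0 _ d3)
  have c05 := aux_coprime _ _ (hne0 _ d5)
  have c13 := aux_coprime _ _ n13.symm
  have c15 := aux_coprime _ _ n15.symm
  have c35 := aux_coprime _ _ n35.symm
  have z0 := minpoly.aeval (ZMod 2) (1 : K)
  have z1 := minpoly.aeval (ZMod 2) β
  have z3 := minpoly.aeval (ZMod 2) (β ^ 3)
  have z5 := minpoly.aeval (ZMod 2) (β ^ 5)
  have v0 := hdvd 1 (one_pow _)
  have v1 := hdvd β hb1
  have v3 := hdvd _ (hbk 3)
  have v5 := hdvd _ (hbk 5)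
  have o0 := mon 1
  have o1 := mon β
  have o3 := mon (β ^ 3)
  have o5 := mon (β ^ 5)
  generalize minpoly (ZMod 2) (1 : K) = p0 at *
  generalize minpoly (ZMod 2) (β ^ 3) = p3 at *
  generalize minpoly (ZMod 2) (β ^ 5) = p5 at *
  have hp1min : ∀ u : (ZMod 2)[X], aeval β u = 0 → minpoly (ZMod 2) β ∣ u := fun u hu =>
    minpoly.dvd _ _ hu
  have hp0min : ∀ u : (ZMod 2)[X], aeval (1 : K) u = 0 → p0 ∣ u := fun u hu => by
    have := minpoly.dvd (ZMod 2) _ hu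
    rwa [minpoly.one, hone] at this
  generalize minpoly (ZMod 2) β = p1 at *
  have w1 : p0 * p1 ∣ X ^ (2 ^ m - 1) - 1 := c01.mul_dvd v0 v1
  have w3 : p0 * p1 * p3 * p5 ∣ X ^ (2 ^ m - 1) - 1 := by
    refine IsCoprime.mul_dvd ?_ (IsCoprime.mul_dvd ?_ w1 v3) v5
    · exact (c05.mul_left c15).mul_left c35
    · exact c03.mul_left c13
  have hgfac : p0 ^ 2 * p1 ^ 2 * p3 * p5 = (p0 * p1) * (p0 * p1 * p3 * p5) := by ring
  have hsq : (X : (ZMod 2)[X]) ^ (2 * (2 ^ m - 1)) - 1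
      = (X ^ (2 ^ m - 1) - 1) * (X ^ (2 ^ m - 1) - 1) := by
    have h2 : (1 + 1 : (ZMod 2)[X]) = 0 := CharTwo.add_self_eq_zero 1
    rw [mul_comm 2, pow_mul]
    linear_combination (X ^ (2 ^ m - 1) - 1) * h2
  have hgd : p0 ^ 2 * p1 ^ 2 * p3 * p5 ∣ X ^ (2 * (2 ^ m - 1)) - 1 := by
    rw [hgfac, hsq]
    exact mul_dvd_mul w1 w3
  have hgm : (p0 ^ 2 * p1 ^ 2 * p3 * p5).Monic :=
    (((o0.pow 2).mul (o1.pow 2)).mul o3).mul o5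
  have hgdeg : (p0 ^ 2 * p1 ^ 2 * p3 * p5).natDegree = 4 * m + 2 := by
    rw [(((o0.pow 2).mul (o1.pow 2)).mul o3).natDegree_mul o5,
      ((o0.pow 2).mul (o1.pow 2)).natDegree_mul o3, (o0.pow 2).natDegree_mul (o1.pow 2),
      o0.natDegree_pow, o1.natDegree_pow, d0, d1, d3, d5]
    ring
  constructor
  · rw [aux_dim _ _ hgd hgm _ hgdeg (by omega)]
    omega
  have hC := aux_mem _ _ hgd
  obtain ⟨u, hu1, hu2, hu3, hu4⟩ := aux_word _ (by omega) hcardn β hβ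
  have hneg : ∀ p : (ZMod 2)[X], p + p = 0 := CharTwo.add_self_eq_zero
  have h8 : 8 ∈ {w | ∃ c ∈ cyclicCode (ZMod 2) (2 * (2 ^ m - 1)) (p0 ^ 2 * p1 ^ 2 * p3 * p5),
      c ≠ 0 ∧ c.support.card = w} := by
    have hcard : (u + X ^ (2 ^ m - 1) * u).support.card = 8 := by
      rw [aux_card _ _ _ hu1, hu2]
    refine ⟨u + X ^ (2 ^ m - 1) * u, ?_, ?_, hcard⟩
    · rw [hC]
      constructor
      · refine (degree_add_le _ _).trans_lt (max_lt (hu1.trans_le ?_) ?_)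
        · exact_mod_cast (by omega)
        · have hu0 : u ≠ 0 := by
            rintro rfl
            simp at hu2
          rw [degree_mul, degree_X_pow]
          rw [degree_eq_natDegree hu0] at hu1 ⊢
          norm_cast at hu1 ⊢
          omega
      · have : u + X ^ (2 ^ m - 1) * u = u * (X ^ (2 ^ m - 1) - 1) := by
          linear_combination hneg u
        rw [this, hgfac]
        exact mul_dvd_mul (c01.mul_dvd (hp0min u hu3) (hp1min u hu4)) w3
    · intro h
      rw [h] at hcard
      simp at hcard
  apply le_antisymm (Nat.sInf_le h8)
  refine le_csInf ⟨8, h8⟩ ?_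
  rintro w ⟨c, hc, hc0, rfl⟩
  rw [hC] at hc
  obtain ⟨hcdeg, hcdvd⟩ := hc
  set n := 2 ^ m - 1 with hn
  have hXm : (X ^ n : (ZMod 2)[X]).Monic := monic_X_pow n
  have hdec := modByMonic_add_div c (X ^ n)
  have hud : (c %ₘ X ^ n).degree < n := by
    have := degree_modByMonic_lt c hXm
    rwa [degree_X_pow] at this
  have hvd : (c /ₘ X ^ n).degree < n := by
    by_cases hv0 : c /ₘ X ^ n = 0
    · rw [hv0, degree_zero]; exact WithBot.bot_lt_coe _
    · rw [degree_eq_natDegree hv0, natDegree_divByMonic _ hXm, natDegree_X_pow]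
      rw [degree_eq_natDegree hc0] at hcdeg
      norm_cast at hcdeg ⊢
      omega
  generalize c %ₘ X ^ n = a at *
  generalize c /ₘ X ^ n = b at *
  have hcc : c.support.card = a.support.card + b.support.card := by
    rw [← hdec, aux_card _ _ _ hud]
  have hcz : ∀ γ : K, aeval γ (p0 * p1 * p3 * p5) = 0 → aeval γ c = 0 := by
    intro γ hγ
    obtain ⟨q, rfl⟩ := hcdvd
    rw [hgfac, map_mul, map_mul, hγ]
    simp
  by_cases hab : a + b = 0
  · have hba : b = a := by linear_combination hab - hneg a
    subst hba
    have hb0 : b ≠ 0 := by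
      rintro rfl
      apply hc0
      rw [← hdec]; simp
    have hcb : c = b * (X ^ n - 1) := by
      rw [← hdec]
      linear_combination hneg b
    have hroot : ∀ γ : K, γ ^ n = 1 → aeval γ (p0 * p1) = 0 → aeval γ b = 0 := by
      intro γ hγn hγ
      obtain ⟨q, hq⟩ := hcdvd
      have e1 : aeval γ (derivative c) = 0 := by
        have : c = (p0 * p1) * ((p0 * p1) * (p3 * p5 * q)) := by rw [hq]; ring
        rw [this, derivative_mul, map_add (aeval γ), map_mul (aeval γ) (derivative (p0 * p1)),
          map_mul (aeval γ) (p0 * p1) (p3 * p5 * q), map_mul (aeval γ) (p0 * p1) (derivative _), hγ]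
        simp
      rw [hcb, derivative_mul] at e1
      simp only [derivative_sub, derivative_X_pow, derivative_one, map_add, map_mul, map_sub,
        map_pow, aeval_X, hγn, hodd, map_one] at e1
      have hγ0 : γ ≠ 0 := by
        rintro rfl
        rw [zero_pow (by omega)] at hγn
        exact zero_ne_one hγn
      have : aeval γ b * γ ^ (n - 1) = 0 := by simpa using e1
      exact (mul_eq_zero.1 this).resolve_right (pow_ne_zero _ hγ0)
    have r0 : aeval (1 : K) b = 0 := hroot 1 (one_pow _) (by rw [map_mul, z0, zero_mul])
    have r1 : aeval β b = 0 := hroot β hb1 (by rw [map_mul, z1, mul_zero])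
    have r2 := aux_sq _ _ r1
    have := aux_bch β n hβ 3 b hb0 hvd (by
      intro j hj
      interval_cases j
      · simpa using r0
      · simpa using r1
      · exact r2)
    omega
  · have hw : ∀ γ : K, γ ^ n = 1 → aeval γ c = 0 → aeval γ (a + b) = 0 := by
      intro γ hγ h
      rw [← hdec, map_add, map_mul, map_pow, aeval_X, hγ, one_mul, ← map_add] at h
      exact h
    have r0 : aeval (1 : K) (a + b) = 0 := hw 1 (one_pow _) (hcz _ (by simp [z0]))
    have r1 : aeval β (a + b) = 0 := hw β hb1 (hcz _ (by simp [z1]))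
    have r3 : aeval (β ^ 3) (a + b) = 0 := hw _ (hbk 3) (hcz _ (by simp [z3]))
    have r5 : aeval (β ^ 5) (a + b) = 0 := hw _ (hbk 5) (hcz _ (by simp [z5]))
    have r2 := aux_sq _ _ r1
    have r4 := aux_sq _ _ r2
    have r6 := aux_sq _ _ r3
    rw [← pow_mul] at r4 r6
    have := aux_bch β n hβ 7 (a + b) hab ((degree_add_le _ _).trans_lt (max_lt hud hvd)) (by
      intro j hj
      interval_cases j
      · rw [pow_zero]; exact r0
      · rw [pow_one]; exact r1
      · exact r2
      · exact r3
      · exact r4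
      · exact r5
      · exact r6)
    have h3 : (a + b).support.card ≤ a.support.card + b.support.card :=
      (Finset.card_le_card support_add).trans (Finset.card_union_le _ _)
    omega
end

section
/- Let m ≥ 8 be an even integer, n = (2^m − 1)/3, and let β be a primitive n-th root of unity in F_{2^m}. Then the cyclic code of length 2n over F_2 with generator polynomial (x−1)^2 m_β(x)^2 m_{β^3}(x) m_{β^5}(x) has dimension 2(2^m − 1)/3 − 4m − 2 and minimum distance exactly 8. -/
open Polynomial

/-- BCH-type bound via the Vandermonde determinant. -/
theorem bch_aux {K : Type*} [Field K] {n : ℕ} {β : K} (hβ : IsPrimitiveRoot β n)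
    [Algebra (ZMod 2) K] (v : (ZMod 2)[X]) (hv : v.degree < n) (hv0 : v ≠ 0) (δ : ℕ)
    (h : ∀ j < δ, aeval (β ^ j) v = 0) : δ < v.support.card := by
  by_contra! hle
  set w := v.support.card with hw
  let e : Fin w ≃ v.support := v.support.equivFin.symm
  have hlt : ∀ i : Fin w, (e i : ℕ) < n := fun i => by
    have h1 := le_degree_of_mem_supp _ (e i).2
    exact_mod_cast lt_of_le_of_lt h1 hv
  have inj : Function.Injective (fun i : Fin w => β ^ (e i : ℕ)) := by
    intro i j hij
    have := hβ.pow_inj (hlt i) (hlt j) hij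
    exact e.injective (Subtype.ext this)
  have key := Matrix.eq_zero_of_forall_pow_sum_mul_pow_eq_zero
    (f := fun i : Fin w => β ^ (e i : ℕ))
    (v := fun i : Fin w => algebraMap (ZMod 2) K (v.coeff (e i))) inj (by
      intro j
      have h1 := h j (lt_of_lt_of_le j.2 hle)
      rw [aeval_def, eval₂_eq_sum, Polynomial.sum_def, ← Finset.sum_coe_sort, ← e.sum_comp] at h1
      rw [← h1]
      refine Finset.sum_congr rfl fun i _ => ?_
      rw [← pow_mul, ← pow_mul, mul_comm (j : ℕ)])
  have hpos : 0 < w := by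
    rw [hw, Finset.card_pos, Polynomial.support_nonempty]; exact hv0
  have := congrFun key ⟨0, hpos⟩
  simp only [Pi.zero_apply, map_eq_zero] at this
  exact (mem_support_iff.1 (e ⟨0, hpos⟩).2) this

theorem support_card_aux {F : Type*} [Field F] (n : ℕ) (a b : F[X])
    (ha : a.degree < n) :
    (a + X ^ n * b).support.card = a.support.card + b.support.card := by
  have hc : ∀ i, (a + X ^ n * b).coeff i = if i < n then a.coeff i else b.coeff (i - n) := by
    intro i
    rw [coeff_add, coeff_X_pow_mul']
    by_cases h : i < n
    · simp [h, not_le.2 h]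
    · have : a.coeff i = 0 := coeff_eq_zero_of_degree_lt (lt_of_lt_of_le ha (by exact_mod_cast not_lt.1 h))
      simp [h, this, not_lt.1 h]
  have ha' : ∀ i, a.coeff i ≠ 0 → i < n := by
    intro i hi
    by_contra h
    exact hi (coeff_eq_zero_of_degree_lt (lt_of_lt_of_le ha (by exact_mod_cast not_lt.1 h)))
  have : (a + X ^ n * b).support = a.support ∪ b.support.map (addRightEmbedding n) := by
    ext i
    simp only [mem_support_iff, Finset.mem_union, Finset.mem_map, addRightEmbedding_apply, hc]
    split_ifs with h
    · constructor
      · exact Or.inl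
      · rintro (h1 | ⟨k, _, hk⟩)
        · exact h1
        · omega
    · constructor
      · intro h1; exact Or.inr ⟨i - n, h1, by omega⟩
      · rintro (h1 | ⟨k, h1, hk⟩)
        · exact absurd (ha' i h1) h
        · subst hk; simpa using h1
  rw [this, Finset.card_union_of_disjoint, Finset.card_map]
  rw [Finset.disjoint_left]
  intro i hi hj
  simp only [mem_support_iff, Finset.mem_map, addRightEmbedding_apply] at hi hj
  obtain ⟨k, _, hk⟩ := hj
  have := ha' i hi
  omega

theorem conj_aux {K : Type*} [Field K] [Fintype K] [Algebra (ZMod 2) K] {m : ℕ}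
    (hK : Fintype.card K = 2 ^ m) (a b : K)
    (h : ∀ i < m, a ^ (2 ^ i) ≠ b) :
    IsCoprime (minpoly (ZMod 2) a) (minpoly (ZMod 2) b) := by
  have ia : IsIntegral (ZMod 2) a := Algebra.IsIntegral.isIntegral a
  have ib : IsIntegral (ZMod 2) b := Algebra.IsIntegral.isIntegral b
  have hfin : Module.finrank (ZMod 2) K = m := by
    have := Module.card_eq_pow_finrank (K := ZMod 2) (V := K)
    rw [hK, ZMod.card] at this
    exact (Nat.pow_right_injective le_rfl this).symm
  rw [(minpoly.irreducible ia).coprime_iff_not_dvd]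
  intro hd
  have hconj : IsConjRoot (ZMod 2) a b := by
    apply isConjRoot_of_aeval_eq_zero ia
    have := (minpoly.irreducible ia).associated_of_dvd (minpoly.irreducible ib) hd
    rw [eq_of_monic_of_associated (minpoly.monic ia) (minpoly.monic ib) this]
    exact minpoly.aeval _ _
  obtain ⟨σ, hσ⟩ := hconj.symm.exists_algEquiv
  obtain ⟨i, hi⟩ := (FiniteField.bijective_frobeniusAlgEquivOfAlgebraic_pow (ZMod 2) K).2 σ
  refine h i (hfin ▸ i.2) ?_
  rw [← hσ, ← hi]
  simp [AlgEquiv.coe_pow, FiniteField.coe_frobeniusAlgEquivOfAlgebraic_iterate]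

theorem deg_aux {K : Type*} [Field K] [Fintype K] [Algebra (ZMod 2) K] {m : ℕ}
    (hm : 8 ≤ m) (hme : Even m)
    (hK : Fintype.card K = 2 ^ m) {n : ℕ} (hn : 3 * n + 1 = 2 ^ m)
    {β : K} (hβ : IsPrimitiveRoot β n) (k : ℕ) (hk : 0 < k) (hk5 : k ≤ 5) :
    (minpoly (ZMod 2) (β ^ k)).natDegree = m := by
  have ia : IsIntegral (ZMod 2) (β ^ k) := Algebra.IsIntegral.isIntegral _
  set d := (minpoly (ZMod 2) (β ^ k)).natDegree with hd
  have hd0 : 0 < d := minpoly.natDegree_pos ia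
  have irr := minpoly.irreducible ia
  have hn0 : n ≠ 0 := by
    rintro rfl
    have := Nat.pow_le_pow_right (show 0 < 2 by norm_num) hm
    omega
  have hβ0 : β ≠ 0 := hβ.ne_zero hn0
  have h1 : d ∣ m := by
    refine (Irreducible.natDegree_dvd_iff_dvd_X_pow_card_pow_sub_X irr).2 ?_
    apply minpoly.dvd
    simp only [Nat.card_zmod, map_sub, map_pow, aeval_X]
    rw [← hK, FiniteField.pow_card, sub_self]
  have h2 : (β ^ k) ^ (2 ^ d) = β ^ k := by
    have := (Irreducible.natDegree_dvd_iff_dvd_X_pow_card_pow_sub_X irr).1 (dvd_refl _)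
    have h3 := aeval_eq_zero_of_dvd_aeval_eq_zero this (minpoly.aeval _ _)
    simp only [Nat.card_zmod, map_sub, map_pow, aeval_X] at h3
    exact sub_eq_zero.1 h3
  have h3 : n ∣ k * (2 ^ d - 1) := by
    rw [← hβ.pow_eq_one_iff_dvd, pow_mul]
    have hne : (β ^ k) ≠ 0 := pow_ne_zero _ hβ0
    apply mul_right_cancel₀ hne
    rw [← pow_succ, Nat.sub_add_cancel Nat.one_le_two_pow, h2, one_mul]
  obtain ⟨q, hq⟩ := h1
  by_contra hne
  obtain ⟨r, hr⟩ := hme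
  have hdr : d ≤ r := by
    have hq2 : 2 ≤ q := by
      rcases q with _ | _ | q
      · omega
      · exact absurd (by simpa using hq.symm) hne
      · omega
    nlinarith
  have h16 : 2 ^ 4 ≤ 2 ^ r := Nat.pow_le_pow_right (by norm_num) (by omega)
  have h5 : 2 ^ d ≤ 2 ^ r := Nat.pow_le_pow_right (by norm_num) hdr
  have hd2 : 2 ^ 1 ≤ 2 ^ d := Nat.pow_le_pow_right (by norm_num) hd0
  have h6 := Nat.le_of_dvd (Nat.mul_pos hk (by omega)) h3
  have h7 : k * (2 ^ d - 1) ≤ 5 * (2 ^ r - 1) := Nat.mul_le_mul hk5 (by omega)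
  rw [hr, pow_add] at hn
  have : 2 ^ r * 2 ^ r ≤ 15 * (2 ^ r - 1) + 1 := by omega
  generalize 2 ^ r = T at *
  obtain ⟨S, rfl⟩ : ∃ S, T = S + 16 := ⟨T - 16, by omega⟩
  have : 15 * (S + 16 - 1) = 15 * S + 225 := by omega
  nlinarith

theorem arith_aux {m n : ℕ} (hm : 8 ≤ m) (hn : 3 * n + 1 = 2 ^ m) (i : ℕ) (hi : i < m)
    (a b : ℕ) (hab : (a = 1 ∧ b = 3) ∨ (a = 1 ∧ b = 5) ∨ (a = 3 ∧ b = 5)) :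
    ¬ (a * 2 ^ i ≡ b [MOD n]) := by
  intro h
  have h1 : (n : ℤ) ∣ b - a * 2 ^ i := by
    have := h.dvd
    push_cast at this
    exact this
  obtain ⟨q, hq⟩ := h1
  obtain ⟨s, rfl⟩ : ∃ s, m = s + 4 := ⟨m - 4, by omega⟩
  have hT : 2 ^ 4 ≤ 2 ^ s := Nat.pow_le_pow_right (by norm_num) (by omega)
  have hn' : 3 * (n : ℤ) = 16 * 2 ^ s - 1 := by
    have : 3 * (n : ℤ) + 1 = 2 ^ (s + 4) := by exact_mod_cast hn
    rw [pow_add] at this; linarith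
  have hT' : (16 : ℤ) ≤ 2 ^ s := by exact_mod_cast hT
  have hq' : 3 * (b : ℤ) - 3 * (a * 2 ^ i) = (16 * 2 ^ s - 1) * q := by
    rw [← hn']; linarith
  have hcase : i ≤ s ∨ i = s + 1 ∨ i = s + 2 ∨ i = s + 3 := by omega
  have main : ∀ (c : ℤ) (T q r : ℤ), 16 ≤ T → c = (16 * T - 1) * q + r → 0 < r → r < 16 * T - 1 →
      ∀ q', c = (16 * T - 1) * q' → False := by
    intro c T q r hT h1 h2 h3 q' h4
    have : r = (16 * T - 1) * (q' - q) := by linarith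
    have h5 : 0 < q' - q := by
      by_contra h; nlinarith
    nlinarith
  have hneg : 3 * ((a : ℤ) * 2 ^ i) - 3 * b = (16 * 2 ^ s - 1) * (-q) := by linarith
  rcases hcase with hc | rfl | rfl | rfl
  · have hi' : 2 ^ i ≤ 2 ^ s := Nat.pow_le_pow_right (by norm_num) hc
    have hi'' : (2 : ℤ) ^ i ≤ 2 ^ s := by exact_mod_cast hi'
    have hip : (1 : ℤ) ≤ 2 ^ i := by exact_mod_cast Nat.one_le_two_pow
    have hodd : (2 : ℤ) ^ i = 1 ∨ (2 : ℤ) ^ i = 2 ∨ (2 : ℤ) ^ i = 4 ∨ 8 ≤ (2 : ℤ) ^ i := by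
      rcases i with _ | _ | _ | i
      · simp
      · simp
      · norm_num
      · right; right; right
        have : (1 : ℤ) ≤ 2 ^ i := by exact_mod_cast Nat.one_le_two_pow
        rw [pow_succ, pow_succ, pow_succ]; linarith
    generalize (2 : ℤ) ^ i = I at *
    rcases hab with ⟨rfl, rfl⟩ | ⟨rfl, rfl⟩ | ⟨rfl, rfl⟩ <;> push_cast at * <;>
    rcases hodd with rfl | rfl | rfl | h8 <;>
    first
      | exact main _ _ 0 _ hT' (by rw [mul_zero, zero_add]) (by linarith) (by linarith) _ hq'
      | exact main _ _ 0 _ hT' (by rw [mul_zero, zero_add]) (by linarith) (by linarith) _ hneg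
  · rw [pow_add] at hneg
    rcases hab with ⟨rfl, rfl⟩ | ⟨rfl, rfl⟩ | ⟨rfl, rfl⟩ <;> push_cast at hneg
    · exact main _ _ 0 (3 * (1 * (2 ^ s * 2 ^ 1)) - 3 * 3) hT' (by ring) (by linarith) (by linarith) _ hneg
    · exact main _ _ 0 (3 * (1 * (2 ^ s * 2 ^ 1)) - 3 * 5) hT' (by ring) (by linarith) (by linarith) _ hneg
    · exact main _ _ 1 (2 * 2 ^ s - 14) hT' (by ring) (by linarith) (by linarith) _ hneg
  · rw [pow_add] at hneg
    rcases hab with ⟨rfl, rfl⟩ | ⟨rfl, rfl⟩ | ⟨rfl, rfl⟩ <;> push_cast at hneg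
    · exact main _ _ 0 (3 * (1 * (2 ^ s * 2 ^ 2)) - 3 * 3) hT' (by ring) (by linarith) (by linarith) _ hneg
    · exact main _ _ 0 (3 * (1 * (2 ^ s * 2 ^ 2)) - 3 * 5) hT' (by ring) (by linarith) (by linarith) _ hneg
    · exact main _ _ 2 (4 * 2 ^ s - 13) hT' (by ring) (by linarith) (by linarith) _ hneg
  · rw [pow_add] at hneg
    rcases hab with ⟨rfl, rfl⟩ | ⟨rfl, rfl⟩ | ⟨rfl, rfl⟩ <;> push_cast at hneg
    · exact main _ _ 1 (8 * 2 ^ s - 8) hT' (by ring) (by linarith) (by linarith) _ hneg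
    · exact main _ _ 1 (8 * 2 ^ s - 14) hT' (by ring) (by linarith) (by linarith) _ hneg
    · exact main _ _ 4 (8 * 2 ^ s - 11) hT' (by ring) (by linarith) (by linarith) _ hneg

theorem cop_aux {K : Type*} [Field K] [Fintype K] [Algebra (ZMod 2) K] {m : ℕ}
    (hm : 8 ≤ m)
    (hK : Fintype.card K = 2 ^ m) {n : ℕ} (hn : 3 * n + 1 = 2 ^ m)
    {β : K} (hβ : IsPrimitiveRoot β n)
    (a b : ℕ) (hab : (a = 1 ∧ b = 3) ∨ (a = 1 ∧ b = 5) ∨ (a = 3 ∧ b = 5)) :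
    IsCoprime (minpoly (ZMod 2) (β ^ a)) (minpoly (ZMod 2) (β ^ b)) := by
  apply conj_aux hK
  intro i hi h
  have hn0 : n ≠ 0 := by
    rintro rfl
    have := Nat.pow_le_pow_right (show 0 < 2 by norm_num) hm
    omega
  have hf : IsOfFinOrder β := isOfFinOrder_iff_pow_eq_one.2 ⟨n, Nat.pos_of_ne_zero hn0, hβ.pow_eq_one⟩
  rw [← pow_mul, hf.pow_eq_pow_iff_modEq, ← hβ.eq_orderOf] at h
  exact arith_aux hm hn i hi a b hab h

theorem cop1_aux {K : Type*} [Field K] [Fintype K] [Algebra (ZMod 2) K] {m : ℕ}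
    (hK : Fintype.card K = 2 ^ m) {n : ℕ} (h5 : 5 < n)
    {β : K} (hβ : IsPrimitiveRoot β n)
    (a : ℕ) (ha : 0 < a) (ha5 : a ≤ 5) :
    IsCoprime (X - 1 : (ZMod 2)[X]) (minpoly (ZMod 2) (β ^ a)) := by
  rw [← minpoly.one (ZMod 2) K]
  apply conj_aux hK
  intro i hi h
  rw [one_pow] at h
  exact hβ.pow_ne_one_of_pos_of_lt ha.ne' (by omega) h.symm

theorem code_aux {F : Type*} [Field F] {N : ℕ} {g : F[X]} (hg : g ∣ X ^ N - 1) (c : F[X]) :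
    c ∈ cyclicCode F N g ↔ c.degree < N ∧ g ∣ c := by
  unfold cyclicCode
  rw [Submodule.mem_inf, mem_degreeLT, Submodule.restrictScalars_mem, Ideal.mem_span_pair]
  refine and_congr_right fun _ => ⟨?_, ?_⟩
  · rintro ⟨a, b, rfl⟩
    exact dvd_add (dvd_mul_left _ _) (hg.mul_left _)
  · rintro ⟨k, rfl⟩
    exact ⟨k, 0, by ring⟩

theorem dim_aux {F : Type*} [Field F] {N : ℕ} {g : F[X]} (hg : g ∣ X ^ N - 1) (hN : 0 < N) :
    Module.finrank F (cyclicCode F N g) = N - g.natDegree := by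
  have hne : (X ^ N - 1 : F[X]) ≠ 0 := X_pow_sub_C_ne_zero hN 1
  have hg0 : g ≠ 0 := fun h => hne (by rw [h] at hg; exact zero_dvd_iff.1 hg)
  have hle : g.natDegree ≤ N := by
    have := natDegree_le_of_dvd hg hne
    have h2 : (X ^ N - 1 : F[X]).natDegree = N := natDegree_X_pow_sub_C (n := N) (r := (1 : F))
    omega
  have inj : Function.Injective (LinearMap.mulLeft F g) := by
    intro a b hab
    exact mul_left_cancel₀ hg0 hab
  have : cyclicCode F N g = (degreeLT F (N - g.natDegree)).map (LinearMap.mulLeft F g) := by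
    ext c
    rw [code_aux hg, Submodule.mem_map]
    have hk : ∀ k : F[X], (g * k).degree < N ↔ k.degree < ((N - g.natDegree : ℕ) : WithBot ℕ) := by
      intro k
      by_cases hk : k = 0
      · subst hk; simp
      · rw [degree_mul, degree_eq_natDegree hg0, degree_eq_natDegree hk]
        norm_cast
        omega
    constructor
    · rintro ⟨h1, k, rfl⟩
      exact ⟨k, mem_degreeLT.2 ((hk k).1 h1), rfl⟩
    · rintro ⟨k, h1, rfl⟩
      exact ⟨(hk k).2 (mem_degreeLT.1 h1), dvd_mul_right _ _⟩
  rw [this, ← (Submodule.equivMapOfInjective _ inj _).finrank_eq,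
    (degreeLTEquiv F _).finrank_eq, Module.finrank_fin_fun]

theorem aeval_sq_aux {K : Type*} [Field K] [Algebra (ZMod 2) K] (a : K) (p : (ZMod 2)[X])
    (h : aeval a p = 0) : aeval (a ^ 2) p = 0 := by
  have h1 : expand (ZMod 2) 2 p = p ^ 2 := ZMod.expand_card p
  have h2 := congrArg (aeval a) h1
  rw [expand_aeval, map_pow, h] at h2
  simpa using h2

theorem lower_aux {K : Type*} [Field K] [Algebra (ZMod 2) K]
    {n : ℕ} (hodd : Odd n) {β : K} (hβ : IsPrimitiveRoot β n)
    (c : (ZMod 2)[X]) (hc0 : c ≠ 0) (hdeg : c.degree < (2 * n : ℕ))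
    (hg : ((X - 1) ^ 2 * (minpoly (ZMod 2) β) ^ 2 * minpoly (ZMod 2) (β ^ 3) *
            minpoly (ZMod 2) (β ^ 5)) ∣ c) : 8 ≤ c.support.card := by
  have hn0 : 0 < n := hodd.pos
  have hβ0 : β ≠ 0 := hβ.ne_zero hn0.ne'
  obtain ⟨q, hq⟩ := hg
  have r1 : aeval β (minpoly (ZMod 2) β) = 0 := minpoly.aeval _ _
  have r2 := aeval_sq_aux _ _ r1
  have r4 := aeval_sq_aux _ _ r2
  rw [← pow_mul] at r4
  norm_num at r4
  have r3 : aeval (β ^ 3) (minpoly (ZMod 2) (β ^ 3)) = 0 := minpoly.aeval _ _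
  have r6 := aeval_sq_aux _ _ r3
  rw [← pow_mul] at r6
  norm_num at r6
  have r5 : aeval (β ^ 5) (minpoly (ZMod 2) (β ^ 5)) = 0 := minpoly.aeval _ _
  have hroot : ∀ j < 7, aeval (β ^ j) c = 0 := by
    intro j hj
    rw [hq]
    simp only [map_mul, map_pow, map_sub, aeval_X, map_one]
    interval_cases j
    · simp
    · simp [r1]
    · simp [r2]
    · simp [r3]
    · simp [r4]
    · simp [r5]
    · simp [r6]
  have hdroot : ∀ j < 3, aeval (β ^ j) (derivative c) = 0 := by
    intro j hj
    have hp : aeval (β ^ j) ((X - 1) * minpoly (ZMod 2) β) = 0 := by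
      interval_cases j
      · simp
      · simp [r1]
      · simp [r2]
    have : c = ((X - 1) * minpoly (ZMod 2) β) * (((X - 1) * minpoly (ZMod 2) β) *
        (minpoly (ZMod 2) (β ^ 3) * minpoly (ZMod 2) (β ^ 5) * q)) := by rw [hq]; ring
    rw [this, derivative_mul, derivative_mul]
    generalize (X - 1) * minpoly (ZMod 2) β = p at *
    simp only [map_add, map_mul, hp]
    ring
  have mon : (X ^ n : (ZMod 2)[X]).Monic := monic_X_pow n
  obtain ⟨c0, hc0'⟩ : ∃ a, a = c %ₘ X ^ n := ⟨_, rfl⟩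
  obtain ⟨c1, hc1'⟩ : ∃ a, a = c /ₘ X ^ n := ⟨_, rfl⟩
  have hsplit : c = c0 + X ^ n * c1 := by
    rw [hc0', hc1']; exact (modByMonic_add_div c (X ^ n)).symm
  have d0 : c0.degree < n := by
    have := degree_modByMonic_lt c mon
    rw [degree_X_pow] at this
    rw [hc0']; exact this
  have d1 : c1.degree < n := by
    by_cases h : c1 = 0
    · rw [h, degree_zero]; exact WithBot.bot_lt_coe n
    · rw [degree_eq_natDegree h]
      rw [degree_eq_natDegree hc0] at hdeg
      have hd : c.natDegree < 2 * n := by exact_mod_cast hdeg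
      have : c1.natDegree = c.natDegree - n := by
        rw [hc1', natDegree_divByMonic _ mon, natDegree_X_pow]
      have : c1.natDegree < n := by omega
      exact_mod_cast this
  have hcard : c.support.card = c0.support.card + c1.support.card := by
    rw [hsplit]; exact support_card_aux n c0 c1 d0
  have hpn : ∀ j, (β ^ j) ^ n = 1 := fun j => by
    rw [← pow_mul, mul_comm, pow_mul, hβ.pow_eq_one, one_pow]
  by_cases hr : c0 + c1 = 0
  · have h1 : c1 = -c0 := (neg_eq_of_add_eq_zero_right hr).symm
    have hc00 : c0 ≠ 0 := by
      rintro h; apply hc0; rw [hsplit, h1, h]; simp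
    have hn2 : (n : K) ≠ 0 := by
      have h2 : CharP K 2 := charP_of_injective_algebraMap (algebraMap (ZMod 2) K).injective 2
      rw [Ne, CharP.cast_eq_zero_iff K 2]
      have := Nat.odd_iff.1 hodd
      omega
    have := bch_aux hβ c0 d0 hc00 3 (by
      intro j hj
      have h3 := hdroot j hj
      rw [hsplit, h1] at h3
      simp only [derivative_add, derivative_mul, derivative_X_pow, map_add, map_mul, map_pow, map_neg,
        derivative_neg, aeval_X, hpn] at h3
      simp only [one_mul, map_natCast] at h3
      have h4 : (n : K) * (β ^ j) ^ (n - 1) * aeval (β ^ j) c0 = 0 := by linear_combination -h3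
      have h5 : (n : K) * (β ^ j) ^ (n - 1) ≠ 0 :=
        mul_ne_zero hn2 (pow_ne_zero _ (pow_ne_zero _ hβ0))
      exact (mul_eq_zero.1 h4).resolve_left h5)
    rw [hcard, h1, support_neg]
    omega
  · have h7 := bch_aux hβ (c0 + c1) (lt_of_le_of_lt (degree_add_le _ _) (max_lt d0 d1)) hr 7 (by
      intro j hj
      have h3 := hroot j hj
      rw [hsplit] at h3
      simpa [hpn] using h3)
    have h8 := Finset.card_le_card (support_add (p := c0) (q := c1))
    have h9 := Finset.card_union_le c0.support c1.support
    omega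

theorem four_aux {K : Type*} [Field K] [Fintype K] [Algebra (ZMod 2) K]
    {n : ℕ} (hn : 10 ≤ n) (hK : Fintype.card K = 3 * n + 1) {β : K} :
    ∃ w : (ZMod 2)[X], w ≠ 0 ∧ w.degree < n ∧ w.support.card ≤ 4 ∧ aeval (1 : K) w = 0 ∧
      aeval β w = 0 := by
  classical
  obtain ⟨s, hs, t, ht, hne, heq⟩ := Finset.exists_ne_map_eq_of_card_lt_of_maps_to
    (s := Finset.powersetCard 2 (Finset.range n)) (t := (Finset.univ : Finset K))
    (f := fun s => ∑ e ∈ s, β ^ e)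
    (by
      rw [Finset.card_univ, hK, Finset.card_powersetCard, Finset.card_range, Nat.choose_two_right,
        Nat.lt_div_iff_mul_lt (by norm_num)]
      obtain ⟨k, rfl⟩ : ∃ k, n = k + 10 := ⟨n - 10, by omega⟩
      have : k + 10 - 1 = k + 9 := by omega
      rw [this]
      have h2 : (2 * (3 * (k + 10) + 1) : ℕ) + 2 ≤ (k + 10) * (k + 9) := by nlinarith
      omega)
    (fun _ _ => Finset.mem_coe.2 (Finset.mem_univ _))
  rw [Finset.mem_powersetCard] at hs ht
  have hcoeff : ∀ (u : Finset ℕ) (i : ℕ), (∑ e ∈ u, (X : (ZMod 2)[X]) ^ e).coeff i =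
      if i ∈ u then 1 else 0 := by
    intro u i
    simp [coeff_X_pow]
  have hsupp : (∑ e ∈ s, (X : (ZMod 2)[X]) ^ e - ∑ e ∈ t, X ^ e).support ⊆ s ∪ t := by
    intro i hi
    rw [mem_support_iff, coeff_sub, hcoeff, hcoeff] at hi
    by_contra h
    simp only [Finset.mem_union, not_or] at h
    simp [h] at hi
  refine ⟨∑ e ∈ s, X ^ e - ∑ e ∈ t, X ^ e, ?_, ?_, ?_, ?_, ?_⟩
  · intro h
    apply hne
    ext i
    have := congrArg (fun p => coeff p i) h
    simp only [coeff_sub, hcoeff, coeff_zero] at this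
    by_cases h1 : i ∈ s <;> by_cases h2 : i ∈ t <;> simp_all
  · rw [degree_lt_iff_coeff_zero]
    intro i hi
    by_contra h
    have := hsupp (mem_support_iff.2 h)
    rcases Finset.mem_union.1 this with h1 | h1
    · have := Finset.mem_range.1 (hs.1 h1); omega
    · have := Finset.mem_range.1 (ht.1 h1); omega
  · have := Finset.card_le_card hsupp
    have h2 := Finset.card_union_le s t
    omega
  · simp [hs.2, ht.2]
  · simpa [sub_eq_zero] using heq

/-- for even `m ≥ 8`, `n = (2^m - 1)/3` and `β` a primitive `n`-th root of
unity in `F_{2^m}`, the repeated-root binary cyclic code of length `2n` with generator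
polynomial `(x-1)^2 m_β(x)^2 m_{β³}(x) m_{β⁵}(x)` has dimension `2(2^m - 1)/3 - 4m - 2`
and minimum distance exactly `8`. -/
theorem statement12 {K : Type*} [Field K] [Fintype K] [Algebra (ZMod 2) K]
    (m : ℕ) (hm : 8 ≤ m) (hme : Even m) (hK : Fintype.card K = 2 ^ m)
    (n : ℕ) (hn : n = (2 ^ m - 1) / 3)
    (β : K) (hβ : IsPrimitiveRoot β n) :
    Module.finrank (ZMod 2)
        (cyclicCode (ZMod 2) (2 * n)
          ((X - 1) ^ 2 * (minpoly (ZMod 2) β) ^ 2 * minpoly (ZMod 2) (β ^ 3) *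
            minpoly (ZMod 2) (β ^ 5))) =
      2 * (2 ^ m - 1) / 3 - 4 * m - 2 ∧
    minDist (cyclicCode (ZMod 2) (2 * n)
        ((X - 1) ^ 2 * (minpoly (ZMod 2) β) ^ 2 * minpoly (ZMod 2) (β ^ 3) *
          minpoly (ZMod 2) (β ^ 5))) = 8 := by
  have hdvd3 : 3 ∣ 2 ^ m - 1 := by
    obtain ⟨r, hr⟩ := hme
    have : 2 ^ m = 4 ^ r := by rw [hr, ← two_mul, pow_mul]; norm_num
    rw [this]
    simpa using Nat.sub_dvd_pow_sub_pow 4 1 r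
  have hpow : 2 ^ 8 ≤ 2 ^ m := Nat.pow_le_pow_right (by norm_num) hm
  have hn3 : 3 * n + 1 = 2 ^ m := by omega
  have hn85 : 85 ≤ n := by omega
  have hodd : Odd n := by
    have : 2 ∣ 2 ^ m := dvd_pow_self 2 (by omega)
    rw [Nat.odd_iff]; omega
  have e1 : β = β ^ 1 := (pow_one β).symm
  have c13 : IsCoprime (minpoly (ZMod 2) β) (minpoly (ZMod 2) (β ^ 3)) := by
    have := cop_aux hm hK hn3 hβ 1 3 (by simp)
    rwa [pow_one] at this
  have c15 : IsCoprime (minpoly (ZMod 2) β) (minpoly (ZMod 2) (β ^ 5)) := by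
    have := cop_aux hm hK hn3 hβ 1 5 (by simp)
    rwa [pow_one] at this
  have c35 := cop_aux hm hK hn3 hβ 3 5 (by simp)
  have c01 : IsCoprime (X - 1 : (ZMod 2)[X]) (minpoly (ZMod 2) β) := by
    have := cop1_aux hK (by omega) hβ 1 (by simp) (by simp)
    rwa [pow_one] at this
  have c03 := cop1_aux hK (by omega) hβ 3 (by simp) (by simp)
  have c05 := cop1_aux hK (by omega) hβ 5 (by simp) (by simp)
  have g1 : (minpoly (ZMod 2) β).natDegree = m := by
    have := deg_aux hm hme hK hn3 hβ 1 (by simp) (by simp)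
    rwa [pow_one] at this
  have g3 := deg_aux hm hme hK hn3 hβ 3 (by simp) (by simp)
  have g5 := deg_aux hm hme hK hn3 hβ 5 (by simp) (by simp)
  have mono : ∀ a : K, (minpoly (ZMod 2) a).Monic := fun a =>
    minpoly.monic (Algebra.IsIntegral.isIntegral a)
  have mon1 : (X - 1 : (ZMod 2)[X]).Monic := monic_X_sub_C 1
  have hdv : ∀ k, minpoly (ZMod 2) (β ^ k) ∣ X ^ n - 1 := by
    intro k
    apply minpoly.dvd
    simp only [map_sub, map_pow, aeval_X, map_one]
    rw [← pow_mul, mul_comm, pow_mul, hβ.pow_eq_one, one_pow, sub_self]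
  have hdv1 : minpoly (ZMod 2) β ∣ X ^ n - 1 := by
    have := hdv 1
    rwa [pow_one] at this
  have hdv0 : (X - 1 : (ZMod 2)[X]) ∣ X ^ n - 1 := by
    simpa using sub_dvd_pow_sub_pow (X : (ZMod 2)[X]) 1 n
  have hA : (X - 1) * minpoly (ZMod 2) β ∣ X ^ n - 1 := c01.mul_dvd hdv0 hdv1
  have hB : (X - 1) * minpoly (ZMod 2) β * minpoly (ZMod 2) (β ^ 3) * minpoly (ZMod 2) (β ^ 5) ∣
      X ^ n - 1 :=
    ((c05.mul_left c15).mul_left c35).mul_dvd ((c03.mul_left c13).mul_dvd hA (hdv 3)) (hdv 5)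
  have hsq : (X ^ (2 * n) - 1 : (ZMod 2)[X]) = (X ^ n - 1) * (X ^ n - 1) := by
    have h2 : (2 : (ZMod 2)[X]) = 0 := CharTwo.two_eq_zero
    rw [two_mul, pow_add]
    linear_combination (X ^ n - 1) * h2
  have hassoc : ((X - 1) ^ 2 * (minpoly (ZMod 2) β) ^ 2 * minpoly (ZMod 2) (β ^ 3) *
            minpoly (ZMod 2) (β ^ 5)) = ((X - 1) * minpoly (ZMod 2) β * minpoly (ZMod 2) (β ^ 3) *
            minpoly (ZMod 2) (β ^ 5)) * ((X - 1) * minpoly (ZMod 2) β) := by ring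
  have hg : ((X - 1) ^ 2 * (minpoly (ZMod 2) β) ^ 2 * minpoly (ZMod 2) (β ^ 3) *
            minpoly (ZMod 2) (β ^ 5)) ∣ X ^ (2 * n) - 1 := by
    rw [hsq, hassoc]
    exact mul_dvd_mul hB hA
  constructor
  · rw [dim_aux hg (by omega)]
    have hnat : ((X - 1) ^ 2 * (minpoly (ZMod 2) β) ^ 2 * minpoly (ZMod 2) (β ^ 3) *
            minpoly (ZMod 2) (β ^ 5)).natDegree = 4 * m + 2 := by
      have h1 : (X - 1 : (ZMod 2)[X]).natDegree = 1 := natDegree_X_sub_C 1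
      rw [Monic.natDegree_mul (((mon1.pow 2).mul ((mono _).pow 2)).mul (mono _)) (mono _),
        Monic.natDegree_mul ((mon1.pow 2).mul ((mono _).pow 2)) (mono _),
        Monic.natDegree_mul (mon1.pow 2) ((mono _).pow 2),
        mon1.natDegree_pow, (mono _).natDegree_pow, h1, g1, g3, g5]
      ring
    rw [hnat]
    have : 2 * (2 ^ m - 1) / 3 = 2 * n := by omega
    omega
  · obtain ⟨w, hw0, hwd, hw4, hw1, hwβ⟩ := four_aux (K := K) (n := n) (by omega) (by omega) (β := β)
    have hlow : ∀ c ∈ cyclicCode (ZMod 2) (2 * n)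
        ((X - 1) ^ 2 * (minpoly (ZMod 2) β) ^ 2 * minpoly (ZMod 2) (β ^ 3) *
          minpoly (ZMod 2) (β ^ 5)), c ≠ 0 → 8 ≤ c.support.card := by
      intro c hc hc0
      rw [code_aux hg] at hc
      exact lower_aux hodd hβ c hc0 hc.1 hc.2
    have hwA : (X - 1) * minpoly (ZMod 2) β ∣ w := by
      refine c01.mul_dvd ?_ (minpoly.dvd _ _ hwβ)
      have := minpoly.dvd (ZMod 2) (1 : K) hw1
      rwa [minpoly.one] at this
    have hne : (X ^ n - 1 : (ZMod 2)[X]) ≠ 0 := X_pow_sub_C_ne_zero (by omega) 1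
    have hmem : (X ^ n - 1) * w ∈ cyclicCode (ZMod 2) (2 * n)
        ((X - 1) ^ 2 * (minpoly (ZMod 2) β) ^ 2 * minpoly (ZMod 2) (β ^ 3) *
          minpoly (ZMod 2) (β ^ 5)) := by
      rw [code_aux hg]
      refine ⟨?_, ?_⟩
      · have hd : (X ^ n - 1 : (ZMod 2)[X]).degree = n := degree_X_pow_sub_C (by omega) 1
        rw [degree_mul, hd, degree_eq_natDegree hw0]
        rw [degree_eq_natDegree hw0] at hwd
        have : w.natDegree < n := by exact_mod_cast hwd
        have h2 : n + w.natDegree < 2 * n := by omega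
        exact_mod_cast h2
      · rw [hassoc]
        exact mul_dvd_mul hB hwA
    have hle : ((X ^ n - 1) * w).support.card ≤ 8 := by
      have : (X ^ n - 1) * w = -w + X ^ n * w := by ring
      rw [this, support_card_aux n _ _ (by rwa [degree_neg]), support_neg]
      omega
    have hge := hlow _ hmem (mul_ne_zero hne hw0)
    apply le_antisymm
    · exact Nat.sInf_le ⟨_, hmem, mul_ne_zero hne hw0, by omega⟩
    · refine le_csInf (Set.nonempty_of_mem (x := ((X ^ n - 1) * w).support.card)
        ⟨_, hmem, mul_ne_zero hne hw0, rfl⟩) ?_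
      rintro b ⟨c, hc, hc0, rfl⟩
      exact hlow c hc hc0
end
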